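/- Let f, g be holomorphic in the open strip α < Re(z) < β and continuous on its closure, and let b, c > 0. Suppose |f(z)|^b |g(z)|^c and |g(z)| tend to 0 as |Im(z)| → ∞, uniformly in the strip. Define I(η) = ∫_{-∞}^{∞} |f(η+it)|^b |g(η+it)|^c dt. Then for any γ ∈ [α, β], I(γ) ≤ I(α)^{(β-γ)/(β-α)} I(β)^{(γ-α)/(β-α)} (with the inequality interpreted appropriately if any integral diverges). -/

import Mathlib

open Real Metric Filter MeromorphicOn

theorem gcv_jensen {h : ℂ → ℂ} {z : ℂ} {r : ℝ} (hr : 0 < r)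
    (hh : AnalyticOnNhd ℂ h (closedBall z r)) (hz : h z ≠ 0) :
    Real.log ‖h z‖ ≤ circleAverage (fun w => Real.log ‖h w‖) z r := by
  rw [← abs_of_pos hr] at hh
  have := hh.circleAverage_log_norm hr.ne' hz
  rw [this, le_add_iff_nonneg_left]
  refine finsum_nonneg fun u => ?_
  by_cases h1 : u ∈ closedBall z |r|
  · refine mul_nonneg (mod_cast hh.divisor_nonneg ..) ?_
    by_cases h0 : u = z
    · simp [h0]
    apply Real.log_nonneg
    have h2 : 0 < ‖z - u‖ := by
      rw [norm_pos_iff, sub_ne_zero]; exact fun h => h0 h.symm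
    rw [mem_closedBall, dist_eq_norm', abs_of_pos hr] at h1
    rw [← div_eq_mul_inv, le_div_iff₀ h2]
    simpa using h1
  · simp [h1]

theorem gcv_submean {f g : ℂ → ℂ} {z : ℂ} {r b c : ℝ} (hr : 0 < r) (hb : 0 < b) (hc : 0 < c)
    (hf : AnalyticOnNhd ℂ f (closedBall z r)) (hg : AnalyticOnNhd ℂ g (closedBall z r)) :
    ‖f z‖ ^ b * ‖g z‖ ^ c ≤ circleAverage (fun w => ‖f w‖ ^ b * ‖g w‖ ^ c) z r := by
  by_cases hfz : f z = 0
  · rw [hfz, norm_zero, Real.zero_rpow hb.ne', zero_mul]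
    exact circleAverage_nonneg_of_nonneg fun _ _ => by positivity
  by_cases hgz : g z = 0
  · rw [hgz, norm_zero, Real.zero_rpow hc.ne', mul_zero]
    exact circleAverage_nonneg_of_nonneg fun _ _ => by positivity
  set v : ℂ → ℝ := fun w => ‖f w‖ ^ b * ‖g w‖ ^ c with hv
  set φ : ℂ → ℝ := fun w => b * Real.log ‖f w‖ + c * Real.log ‖g w‖ with hφ
  have hsub : sphere z |r| ⊆ closedBall z r := by
    rw [abs_of_pos hr]; exact sphere_subset_closedBall
  have hexp : ∀ w, f w ≠ 0 → g w ≠ 0 → v w = Real.exp (φ w) := by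
    intro w h1 h2
    simp only [hv, hφ]
    rw [Real.exp_add, Real.rpow_def_of_pos (norm_pos_iff.2 h1),
      Real.rpow_def_of_pos (norm_pos_iff.2 h2)]
    ring_nf
  have hvz : 0 < v z := by rw [hexp z hfz hgz]; positivity
  set v1 : ℂ → ℝ := fun w => v z * (φ w + (1 - φ z)) with hv1
  have hif : CircleIntegrable (fun w => Real.log ‖f w‖) z r :=
    ((hf.mono hsub).meromorphicOn).circleIntegrable_log_norm
  have hig : CircleIntegrable (fun w => Real.log ‖g w‖) z r :=
    ((hg.mono hsub).meromorphicOn).circleIntegrable_log_norm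
  have hib : CircleIntegrable (fun w => b * Real.log ‖f w‖) z r := hif.const_mul b
  have hic : CircleIntegrable (fun w => c * Real.log ‖g w‖) z r := hig.const_mul c
  have hiφ : CircleIntegrable φ z r := hib.add hic
  have hi0 : CircleIntegrable (fun w => φ w + (1 - φ z)) z r :=
    hiφ.add (circleIntegrable_const _ _ _)
  have hi1 : CircleIntegrable v1 z r := hi0.const_mul (v z)
  have hiv : CircleIntegrable v z r := by
    apply ContinuousOn.circleIntegrable hr.le
    rw [abs_of_pos hr] at hsub
    exact ((hf.continuousOn.mono hsub).norm.rpow_const fun _ _ => Or.inr hb.le).mul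
      ((hg.continuousOn.mono hsub).norm.rpow_const fun _ _ => Or.inr hc.le)
  have havφ : φ z ≤ circleAverage φ z r := by
    have e1 : circleAverage (fun w => b * Real.log ‖f w‖) z r
        = b * circleAverage (fun w => Real.log ‖f w‖) z r :=
      circleAverage_fun_smul (a := b) (f := fun w => Real.log ‖f w‖)
    have e2 : circleAverage (fun w => c * Real.log ‖g w‖) z r
        = c * circleAverage (fun w => Real.log ‖g w‖) z r :=
      circleAverage_fun_smul (a := c) (f := fun w => Real.log ‖g w‖)
    rw [hφ, circleAverage_fun_add hib hic, e1, e2]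
    exact add_le_add (mul_le_mul_of_nonneg_left (gcv_jensen hr hf hfz) hb.le)
      (mul_le_mul_of_nonneg_left (gcv_jensen hr hg hgz) hc.le)
  have hav1 : v z ≤ circleAverage v1 z r := by
    have e1 : circleAverage v1 z r = v z * circleAverage (fun w => φ w + (1 - φ z)) z r :=
      circleAverage_fun_smul (a := v z) (f := fun w => φ w + (1 - φ z))
    rw [e1, circleAverage_fun_add hiφ (circleIntegrable_const _ _ _), circleAverage_const]
    nlinarith
  have hpre : IsPreconnected (closedBall z r) := (convex_closedBall z r).isPreconnected
  have hconn : IsConnected (closedBall z r) := ⟨⟨z, by simp [hr.le]⟩, hpre⟩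
  have hzmem : z ∈ closedBall z r := by simp [hr.le]
  have hcf := hf.preimage_zero_mem_codiscreteWithin hfz hzmem hconn
  have hcg := hg.preimage_zero_mem_codiscreteWithin hgz hzmem hconn
  have hEq : v =ᶠ[codiscreteWithin (sphere z |r|)] fun w => max (v w) (v1 w) := by
    apply Filter.codiscreteWithin_mono hsub
    filter_upwards [hcf, hcg] with w h1 h2
    symm
    apply max_eq_left
    rw [hexp w h1 h2]
    simp only [hv1]
    rw [hexp z hfz hgz]
    have h3 := Real.add_one_le_exp (φ w - φ z)
    have h4 : Real.exp (φ w) = Real.exp (φ z) * Real.exp (φ w - φ z) := by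
      rw [← Real.exp_add]; ring_nf
    rw [h4]
    exact mul_le_mul_of_nonneg_left (by linarith) (Real.exp_pos _).le
  rw [circleAverage_congr_codiscreteWithin hEq hr.ne']
  exact hav1.trans (circleAverage_mono hi1 (hiv.congr_codiscreteWithin hEq)
    fun w _ => le_max_right _ _)

theorem gcv_avg_re (z : ℂ) (r k0 k1 k2 : ℝ) :
    circleAverage (fun w => k0 + k1 * w.re + k2 * w.re ^ 2) z r
      = k0 + k1 * z.re + k2 * z.re ^ 2 + k2 * r ^ 2 / 2 := by
  rw [circleAverage_def]
  have h : ∀ θ : ℝ, k0 + k1 * (circleMap z r θ).re + k2 * (circleMap z r θ).re ^ 2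
      = (k0 + k1 * z.re + k2 * z.re ^ 2) + (k1 * r + 2 * k2 * z.re * r) * Real.cos θ
        + (k2 * r ^ 2) * Real.cos θ ^ 2 := by
    intro θ
    have : (circleMap z r θ).re = z.re + r * Real.cos θ := by
      simp [circleMap, Complex.exp_ofReal_mul_I_re]
    rw [this]; ring
  simp_rw [h]
  rw [intervalIntegral.integral_add, intervalIntegral.integral_add,
    intervalIntegral.integral_const_mul, intervalIntegral.integral_const_mul, integral_cos,
    integral_cos_sq, intervalIntegral.integral_const]
  · have := Real.pi_pos
    simp
    field_simp
    try ring
  all_goals exact Continuous.intervalIntegrable (by fun_prop) _ _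

theorem gcv_max {α β A B : ℝ} (hab : α < β) (hA : 0 ≤ A) (hB : 0 ≤ B) {V : ℂ → ℝ}
    (hV : Continuous V)
    (hsub : ∀ z : ℂ, ∀ r : ℝ, 0 < r → α < z.re - r → z.re + r < β → V z ≤ circleAverage V z r)
    (hVA : ∀ z : ℂ, z.re = α → V z ≤ A) (hVB : ∀ z : ℂ, z.re = β → V z ≤ B)
    (hdec : ∀ ε : ℝ, 0 < ε → ∃ T : ℝ, ∀ z : ℂ, α ≤ z.re → z.re ≤ β → T ≤ |z.im| → V z ≤ ε)
    (z : ℂ) (h1 : α ≤ z.re) (h2 : z.re ≤ β) :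
    V z ≤ (β - z.re) / (β - α) * A + (z.re - α) / (β - α) * B := by
  have hd : 0 < β - α := sub_pos.2 hab
  suffices H : ∀ δ : ℝ, 0 < δ → V z ≤ (β - z.re) / (β - α) * A + (z.re - α) / (β - α) * B
      + δ * (1 + (z.re - α) * (β - z.re)) by
    refine le_of_forall_pos_le_add fun ε hε => ?_
    have hq : 0 < 1 + (z.re - α) * (β - z.re) := by
      have := mul_nonneg (sub_nonneg.2 h1) (sub_nonneg.2 h2); linarith
    have := H (ε / (1 + (z.re - α) * (β - z.re))) (by positivity)
    rwa [div_mul_cancel₀ _ hq.ne'] at this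
  intro δ hδ
  set L : ℂ → ℝ := fun w => (β - w.re) / (β - α) * A + (w.re - α) / (β - α) * B
      + δ * (1 + (w.re - α) * (β - w.re)) with hL
  have hLc : Continuous L := by
    simp only [hL]; fun_prop
  have hLδ : ∀ w : ℂ, α ≤ w.re → w.re ≤ β → δ ≤ L w := by
    intro w h1 h2
    have := mul_nonneg (sub_nonneg.2 h1) (sub_nonneg.2 h2)
    have := mul_nonneg (div_nonneg (sub_nonneg.2 h2) hd.le) hA
    have := mul_nonneg (div_nonneg (sub_nonneg.2 h1) hd.le) hB
    simp only [hL]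
    nlinarith
  by_contra hcon
  push Not at hcon
  change L z < V z at hcon
  obtain ⟨T, hT⟩ := hdec δ hδ
  set S : Set ℂ := (Set.Icc α β) ×ℂ (Set.Icc (-(|T| + |z.im|)) (|T| + |z.im|)) with hS
  have hScomp : IsCompact S := isCompact_Icc.reProdIm isCompact_Icc
  have hzS : z ∈ S := by
    rw [hS, Complex.mem_reProdIm]
    refine ⟨⟨h1, h2⟩, abs_le.1 ?_⟩
    have := abs_nonneg T; linarith
  obtain ⟨y, hyS, hy⟩ := hScomp.exists_isMaxOn ⟨z, hzS⟩ (hV.sub hLc).continuousOn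
  have hmaxS : ∀ w ∈ S, V w - L w ≤ V y - L y := fun w hw => hy hw
  have hypos : 0 < V y - L y := lt_of_lt_of_le (by linarith) (hmaxS z hzS)
  rw [hS, Complex.mem_reProdIm] at hyS
  obtain ⟨⟨hy1, hy2⟩, hy3⟩ := hyS
  have hmax : ∀ w : ℂ, α ≤ w.re → w.re ≤ β → V w - L w ≤ V y - L y := by
    intro w hw1 hw2
    by_cases hw : w ∈ S
    · exact hmaxS w hw
    · have : T ≤ |w.im| := by
        by_contra hlt
        push Not at hlt
        apply hw
        rw [hS, Complex.mem_reProdIm]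
        refine ⟨⟨hw1, hw2⟩, abs_le.1 ?_⟩
        have := le_abs_self T
        have := abs_nonneg z.im
        linarith
      have := hT w hw1 hw2 this
      have := hLδ w hw1 hw2
      linarith
  have hyα : α < y.re := by
    refine lt_of_le_of_ne hy1 fun h => ?_
    have e : L y = A + δ := by
      simp only [hL, ← h]; field_simp; try ring
    have := hVA y h.symm
    linarith
  have hyβ : y.re < β := by
    refine lt_of_le_of_ne hy2 fun h => ?_
    have e : L y = B + δ := by
      simp only [hL, h]; field_simp; try ring
    have := hVB y h
    linarith
  obtain ⟨r, hr, hr1, hr2⟩ : ∃ r : ℝ, 0 < r ∧ α < y.re - r ∧ y.re + r < β := by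
    have hm : 0 < min (y.re - α) (β - y.re) := lt_min (by linarith) (by linarith)
    refine ⟨min (y.re - α) (β - y.re) / 2, by linarith, ?_, ?_⟩
    · have := min_le_left (y.re - α) (β - y.re); linarith
    · have := min_le_right (y.re - α) (β - y.re); linarith
  have hs := hsub y r hr hr1 hr2
  have hLavg : circleAverage L y r = L y - δ * r ^ 2 / 2 := by
    have e : L = fun w => (β / (β - α) * A - α / (β - α) * B + δ * (1 - α * β))
        + (B / (β - α) - A / (β - α) + δ * (α + β)) * w.re + (-δ) * w.re ^ 2 := by
      funext w; simp only [hL]; ring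
    rw [e, gcv_avg_re]; ring
  have hVi : CircleIntegrable V y r := hV.continuousOn.circleIntegrable hr.le
  have hLi : CircleIntegrable L y r := hLc.continuousOn.circleIntegrable hr.le
  have hle : circleAverage (fun w => V w - L w) y r ≤ V y - L y := by
    refine circleAverage_mono_on_of_le_circle (hVi.sub hLi) fun w hw => ?_
    rw [mem_sphere, dist_eq_norm, abs_of_pos hr] at hw
    have := abs_le.1 ((Complex.abs_re_le_norm (w - y)).trans hw.le)
    rw [Complex.sub_re] at this
    exact hmax w (by linarith [this.1]) (by linarith [this.2])
  rw [circleAverage_fun_sub hVi hLi, hLavg] at hle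
  have : 0 < δ * r ^ 2 / 2 := by positivity
  linarith

theorem gcv_int {α β A B N : ℝ} (hab : α < β) (hA : 0 ≤ A) (hB : 0 ≤ B) (hN : 0 ≤ N) {v : ℂ → ℝ}
    (hv : Continuous v)
    (hsub : ∀ z : ℂ, ∀ r : ℝ, 0 < r → α < z.re - r → z.re + r < β → v z ≤ circleAverage v z r)
    (hVA : ∀ t : ℝ, ∫ s in (-N)..N, v (α + (t + s) * Complex.I) ≤ A)
    (hVB : ∀ t : ℝ, ∫ s in (-N)..N, v (β + (t + s) * Complex.I) ≤ B)
    (hdec : ∀ ε : ℝ, 0 < ε → ∃ T : ℝ, ∀ z : ℂ, α ≤ z.re → z.re ≤ β → T ≤ |z.im| → v z ≤ ε)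
    (γ : ℝ) (h1 : α ≤ γ) (h2 : γ ≤ β) :
    ∫ s in (-N)..N, v (γ + s * Complex.I)
      ≤ (β - γ) / (β - α) * A + (γ - α) / (β - α) * B := by
  have hle : -N ≤ N := by linarith
  set V : ℂ → ℝ := fun z => ∫ s in (-N)..N, v (z + s * Complex.I) with hVdef
  have hV : Continuous V := by
    apply intervalIntegral.continuous_parametric_intervalIntegral_of_continuous'
    fun_prop
  have key := gcv_max (V := V) hab hA hB hV ?_ ?_ ?_ ?_ (γ : ℂ) (by simpa using h1)
    (by simpa using h2)
  · simpa [hVdef] using key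
  · intro z r hr hr1 hr2
    have e : circleAverage V z r
        = ∫ s in (-N)..N, circleAverage v (z + s * Complex.I) r := by
      simp only [circleAverage_def, hVdef]
      rw [intervalIntegral.integral_smul, MeasureTheory.intervalIntegral_intervalIntegral_swap]
      · congr 2
        funext s
        congr 1
        funext θ
        simp only [circleMap]
        ring_nf
      · have hc : Continuous (Function.uncurry fun (θ s : ℝ) =>
            v (circleMap z r θ + s * Complex.I)) := by
          simp only [circleMap, Function.uncurry_def]
          fun_prop
        exact (hc.continuousOn.integrableOn_compact
          (isCompact_uIcc.prod isCompact_uIcc)).mono_set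
          (Set.prod_mono Set.uIoc_subset_uIcc Set.uIoc_subset_uIcc)
    rw [e]
    apply intervalIntegral.integral_mono_on hle
    · exact Continuous.intervalIntegrable (by fun_prop) _ _
    · apply Continuous.intervalIntegrable
      simp only [circleAverage_def]
      refine Continuous.fun_const_smul ?_ _
      apply intervalIntegral.continuous_parametric_intervalIntegral_of_continuous'
      simp only [circleMap]
      fun_prop
    · intro s _
      exact hsub _ r hr (by simpa using hr1) (by simpa using hr2)
  · intro z hz
    have := hVA z.im
    convert this using 3
    rw [← hz]
    apply congrArg
    apply Complex.ext <;> simp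
  · intro z hz
    have := hVB z.im
    convert this using 3
    rw [← hz]
    apply congrArg
    apply Complex.ext <;> simp
  · intro ε hε
    obtain ⟨T, hT⟩ := hdec (ε / (2 * N + 1)) (by positivity)
    refine ⟨T + N, fun z hz1 hz2 hz3 => ?_⟩
    have : V z ≤ ∫ s in (-N)..N, ε / (2 * N + 1) := by
      apply intervalIntegral.integral_mono_on hle
      · exact Continuous.intervalIntegrable (by fun_prop) _ _
      · exact Continuous.intervalIntegrable (by fun_prop) _ _
      · intro s hs
        apply hT
        · simpa using hz1
        · simpa using hz2
        · have h3 : |s| ≤ N := abs_le.2 hs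
          have h4 := abs_sub_abs_le_abs_add z.im s
          simp
          linarith
    rw [intervalIntegral.integral_const, smul_eq_mul] at this
    refine this.trans ?_
    rw [mul_div_assoc', div_le_iff₀ (by positivity)]
    nlinarith

theorem gcv_log {α β A B N : ℝ} (hab : α < β) (hA : 0 < A) (hB : 0 < B) (hN : 0 ≤ N) {v : ℂ → ℝ}
    (hv : Continuous v)
    (hsub : ∀ l : ℝ, ∀ z : ℂ, ∀ r : ℝ, 0 < r → α < z.re - r → z.re + r < β →
      Real.exp (l * z.re) * v z ≤ circleAverage (fun w => Real.exp (l * w.re) * v w) z r)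
    (hVA : ∀ t : ℝ, ∫ s in (-N)..N, v (α + (t + s) * Complex.I) ≤ A)
    (hVB : ∀ t : ℝ, ∫ s in (-N)..N, v (β + (t + s) * Complex.I) ≤ B)
    (hdec : ∀ ε : ℝ, 0 < ε → ∃ T : ℝ, ∀ z : ℂ, α ≤ z.re → z.re ≤ β → T ≤ |z.im| → v z ≤ ε)
    (γ : ℝ) (h1 : α ≤ γ) (h2 : γ ≤ β) :
    ∫ s in (-N)..N, v (γ + s * Complex.I)
      ≤ A ^ ((β - γ) / (β - α)) * B ^ ((γ - α) / (β - α)) := by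
  have hd : 0 < β - α := sub_pos.2 hab
  obtain ⟨l, hl⟩ : ∃ l : ℝ, l = (Real.log A - Real.log B) / (β - α) := ⟨_, rfl⟩
  have hl' : l * (β - α) = Real.log A - Real.log B := by rw [hl]; field_simp
  have hAe : Real.exp (Real.log A) = A := Real.exp_log hA
  have hBe : Real.exp (Real.log B) = B := Real.exp_log hB
  have hAB : Real.exp (l * β) * B = Real.exp (l * α) * A := by
    rw [← hAe, ← hBe, ← Real.exp_add, ← Real.exp_add]
    congr 1
    linarith
  have key := gcv_int (v := fun w => Real.exp (l * w.re) * v w) (A := Real.exp (l * α) * A)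
    (B := Real.exp (l * β) * B) hab (by positivity) (by positivity) hN (by fun_prop)
    (hsub l) ?_ ?_ ?_ γ h1 h2
  · simp only [Complex.add_re, Complex.ofReal_re, Complex.mul_re, Complex.I_re, mul_zero,
      Complex.ofReal_im, Complex.I_im, mul_one, sub_self, add_zero] at key
    rw [intervalIntegral.integral_const_mul, hAB, ← add_mul, ← add_div,
      show β - γ + (γ - α) = β - α by ring, div_self hd.ne', one_mul] at key
    have e : A ^ ((β - γ) / (β - α)) * B ^ ((γ - α) / (β - α))
        = Real.exp (-(l * γ)) * (Real.exp (l * α) * A) := by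
      rw [Real.rpow_def_of_pos hA, Real.rpow_def_of_pos hB, ← Real.exp_add]
      nth_rewrite 2 [← hAe]
      rw [← Real.exp_add, ← Real.exp_add, hl]
      congr 1
      field_simp
      ring
    rw [e]
    calc ∫ s in (-N)..N, v (γ + s * Complex.I)
        = Real.exp (-(l * γ)) * (Real.exp (l * γ) * ∫ s in (-N)..N, v (γ + s * Complex.I)) := by
          rw [← mul_assoc, ← Real.exp_add]; simp
      _ ≤ _ := mul_le_mul_of_nonneg_left key (Real.exp_pos _).le
  · intro t
    simp only [Complex.add_re, Complex.ofReal_re, Complex.mul_re, Complex.I_re, mul_zero,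
      Complex.add_im, Complex.ofReal_im, Complex.I_im, mul_one, sub_self, add_zero]
    rw [intervalIntegral.integral_const_mul]
    exact mul_le_mul_of_nonneg_left (hVA t) (Real.exp_pos _).le
  · intro t
    simp only [Complex.add_re, Complex.ofReal_re, Complex.mul_re, Complex.I_re, mul_zero,
      Complex.add_im, Complex.ofReal_im, Complex.I_im, mul_one, sub_self, add_zero]
    rw [intervalIntegral.integral_const_mul]
    exact mul_le_mul_of_nonneg_left (hVB t) (Real.exp_pos _).le
  · intro ε hε
    obtain ⟨T, hT⟩ := hdec (ε / Real.exp (|l| * (|α| + |β|))) (by positivity)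
    refine ⟨T, fun z hz1 hz2 hz3 => ?_⟩
    have h3 := hT z hz1 hz2 hz3
    have h4 : Real.exp (l * z.re) ≤ Real.exp (|l| * (|α| + |β|)) := by
      apply Real.exp_le_exp.2
      refine (le_abs_self _).trans ?_
      rw [abs_mul]
      refine mul_le_mul_of_nonneg_left ?_ (abs_nonneg _)
      rw [abs_le]
      have := neg_abs_le α
      have := le_abs_self β
      have := abs_nonneg α
      have := abs_nonneg β
      constructor <;> linarith
    calc Real.exp (l * z.re) * v z
        ≤ Real.exp (l * z.re) * (ε / Real.exp (|l| * (|α| + |β|))) :=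
          mul_le_mul_of_nonneg_left h3 (Real.exp_pos _).le
      _ ≤ Real.exp (|l| * (|α| + |β|)) * (ε / Real.exp (|l| * (|α| + |β|))) :=
          mul_le_mul_of_nonneg_right h4 (by positivity)
      _ = ε := by field_simp

theorem gcv_log' {α β A B N : ℝ} (hab : α < β) (hA : 0 ≤ A) (hB : 0 ≤ B) (hN : 0 ≤ N) {v : ℂ → ℝ}
    (hv : Continuous v)
    (hsub : ∀ l : ℝ, ∀ z : ℂ, ∀ r : ℝ, 0 < r → α < z.re - r → z.re + r < β →
      Real.exp (l * z.re) * v z ≤ circleAverage (fun w => Real.exp (l * w.re) * v w) z r)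
    (hVA : ∀ t : ℝ, ∫ s in (-N)..N, v (α + (t + s) * Complex.I) ≤ A)
    (hVB : ∀ t : ℝ, ∫ s in (-N)..N, v (β + (t + s) * Complex.I) ≤ B)
    (hdec : ∀ ε : ℝ, 0 < ε → ∃ T : ℝ, ∀ z : ℂ, α ≤ z.re → z.re ≤ β → T ≤ |z.im| → v z ≤ ε)
    (γ : ℝ) (h1 : α < γ) (h2 : γ < β) :
    ∫ s in (-N)..N, v (γ + s * Complex.I)
      ≤ A ^ ((β - γ) / (β - α)) * B ^ ((γ - α) / (β - α)) := by
  have hd : 0 < β - α := sub_pos.2 hab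
  have t1 : 0 ≤ (β - γ) / (β - α) := div_nonneg (by linarith) hd.le
  have t2 : 0 ≤ (γ - α) / (β - α) := div_nonneg (by linarith) hd.le
  have hc : Continuous fun ε : ℝ =>
      (A + ε) ^ ((β - γ) / (β - α)) * (B + ε) ^ ((γ - α) / (β - α)) :=
    ((continuous_const.add continuous_id).rpow_const fun _ => Or.inr t1).mul
      ((continuous_const.add continuous_id).rpow_const fun _ => Or.inr t2)
  have ht := (hc.tendsto 0).mono_left (nhdsWithin_le_nhds (s := Set.Ioi 0))
  simp only [add_zero] at ht
  refine ge_of_tendsto ht ?_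
  filter_upwards [self_mem_nhdsWithin] with ε hε
  have hε : 0 < ε := hε
  exact gcv_log hab (by linarith) (by linarith) hN hv hsub
    (fun t => (hVA t).trans (by linarith)) (fun t => (hVB t).trans (by linarith)) hdec γ h1.le h2.le

open MeasureTheory in
theorem gcv_ofReal {v : ℂ → ℝ} (hv : Continuous v) (hv0 : ∀ z, 0 ≤ v z) (η t N : ℝ) (hN : 0 ≤ N) :
    ENNReal.ofReal (∫ s in (-N)..N, v (η + (t + s) * Complex.I))
      = ∫⁻ s in Set.Ioc (-N) N, ENNReal.ofReal (v (η + (t + s) * Complex.I)) := by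
  rw [intervalIntegral.integral_of_le (by linarith), ofReal_integral_eq_lintegral_ofReal]
  · have : Continuous fun s : ℝ => v (η + (t + s) * Complex.I) := by fun_prop
    exact (this.intervalIntegrable (-N) N).1
  · exact Eventually.of_forall fun s => hv0 _

open MeasureTheory in
theorem gcv_abs {α β : ℝ} (hab : α < β) {v : ℂ → ℝ}
    (hv : Continuous v) (hv0 : ∀ z, 0 ≤ v z)
    (hsub : ∀ l : ℝ, ∀ z : ℂ, ∀ r : ℝ, 0 < r → α < z.re - r → z.re + r < β →
      Real.exp (l * z.re) * v z ≤ circleAverage (fun w => Real.exp (l * w.re) * v w) z r)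
    (hdec : ∀ ε : ℝ, 0 < ε → ∃ T : ℝ, ∀ z : ℂ, α ≤ z.re → z.re ≤ β → T ≤ |z.im| → v z ≤ ε)
    (γ : ℝ) (h1 : α < γ) (h2 : γ < β) :
    ∫⁻ s : ℝ, ENNReal.ofReal (v (γ + s * Complex.I))
      ≤ (∫⁻ s : ℝ, ENNReal.ofReal (v (α + s * Complex.I))) ^ ((β - γ) / (β - α))
        * (∫⁻ s : ℝ, ENNReal.ofReal (v (β + s * Complex.I))) ^ ((γ - α) / (β - α)) := by
  have hd : 0 < β - α := sub_pos.2 hab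
  have t1 : 0 ≤ (β - γ) / (β - α) := div_nonneg (by linarith) hd.le
  have t2 : 0 ≤ (γ - α) / (β - α) := div_nonneg (by linarith) hd.le
  obtain ⟨M, hM⟩ : ∃ M : ℝ, ∀ z : ℂ, α ≤ z.re → z.re ≤ β → v z ≤ M := by
    obtain ⟨T, hT⟩ := hdec 1 one_pos
    have hc : IsCompact ((Set.Icc α β) ×ℂ (Set.Icc (-T) T)) := isCompact_Icc.reProdIm isCompact_Icc
    obtain ⟨M, hM⟩ := hc.bddAbove_image hv.continuousOn
    refine ⟨max M 1, fun z hz1 hz2 => ?_⟩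
    by_cases h : T ≤ |z.im|
    · exact (hT z hz1 hz2 h).trans (le_max_right _ _)
    · push Not at h
      refine le_trans (hM ⟨z, ?_, rfl⟩) (le_max_left _ _)
      rw [Complex.mem_reProdIm]
      exact ⟨⟨hz1, hz2⟩, abs_le.1 h.le⟩
  have bound : ∀ η : ℝ, α ≤ η → η ≤ β → ∀ N : ℝ, 0 ≤ N → ∀ t : ℝ,
      ∫ s in (-N)..N, v (η + (t + s) * Complex.I)
        ≤ (min (∫⁻ s : ℝ, ENNReal.ofReal (v (η + s * Complex.I)))
            (ENNReal.ofReal (2 * N * M))).toReal := by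
    intro η hη1 hη2 N hN t
    rw [← ENNReal.ofReal_le_iff_le_toReal (ne_top_of_le_ne_top ENNReal.ofReal_ne_top
      (min_le_right _ _))]
    refine le_min ?_ ?_
    · rw [gcv_ofReal hv hv0 η t N hN]
      refine (setLIntegral_le_lintegral _ _).trans (le_of_eq ?_)
      have := lintegral_add_left_eq_self (μ := volume)
        (fun s : ℝ => ENNReal.ofReal (v (η + s * Complex.I))) t
      rw [← this]
      simp
    · apply ENNReal.ofReal_le_ofReal
      have : ∫ s in (-N)..N, v (η + (t + s) * Complex.I) ≤ ∫ s in (-N)..N, M := by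
        apply intervalIntegral.integral_mono_on (by linarith)
        · exact Continuous.intervalIntegrable (by fun_prop) _ _
        · exact Continuous.intervalIntegrable (by fun_prop) _ _
        · intro s _
          apply hM <;> simpa
      rw [intervalIntegral.integral_const, smul_eq_mul] at this
      linarith
  have hcov : AECover volume atTop fun n : ℕ => Set.Ioc (-(n : ℝ)) (n : ℝ) :=
    aecover_Ioc (tendsto_neg_atTop_atBot.comp tendsto_natCast_atTop_atTop)
      tendsto_natCast_atTop_atTop
  have hmeas : AEMeasurable (fun s : ℝ => ENNReal.ofReal (v (γ + s * Complex.I))) volume := by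
    have : Continuous fun s : ℝ => v (γ + s * Complex.I) := by fun_prop
    exact this.measurable.ennreal_ofReal.aemeasurable
  refine le_of_tendsto' (hcov.lintegral_tendsto_of_countably_generated hmeas) fun n => ?_
  have hN : (0 : ℝ) ≤ n := Nat.cast_nonneg n
  have e := gcv_ofReal hv hv0 γ 0 n hN
  simp only [Complex.ofReal_zero, zero_add] at e
  rw [← e]
  have key := gcv_log' hab ENNReal.toReal_nonneg ENNReal.toReal_nonneg hN hv hsub
    (bound α le_rfl hab.le n hN) (bound β hab.le le_rfl n hN) hdec γ h1 h2
  refine (ENNReal.ofReal_le_ofReal key).trans ?_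
  rw [ENNReal.ofReal_mul (by positivity), ← ENNReal.ofReal_rpow_of_nonneg ENNReal.toReal_nonneg t1,
    ← ENNReal.ofReal_rpow_of_nonneg ENNReal.toReal_nonneg t2]
  gcongr
  · exact ENNReal.ofReal_toReal_le.trans (min_le_left _ _)
  · exact ENNReal.ofReal_toReal_le.trans (min_le_left _ _)

theorem gcv_clamp_eq {α β : ℝ} {z : ℂ} (h1 : α ≤ z.re) (h2 : z.re ≤ β) :
    ((max α (min β z.re) : ℝ) : ℂ) + (z.im : ℂ) * Complex.I = z := by
  rw [min_eq_right h2, max_eq_right h1, Complex.re_add_im]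

open MeasureTheory in
theorem gabriel_convexity_variant (α β b c : ℝ) (hab : α < β) (hb : 0 < b) (hc : 0 < c)
    (f g : ℂ → ℂ)
    (hf : DifferentiableOn ℂ f {z : ℂ | α < z.re ∧ z.re < β})
    (hg : DifferentiableOn ℂ g {z : ℂ | α < z.re ∧ z.re < β})
    (hfc : ContinuousOn f {z : ℂ | α ≤ z.re ∧ z.re ≤ β})
    (hgc : ContinuousOn g {z : ℂ | α ≤ z.re ∧ z.re ≤ β})
    (hdecay : ∀ ε : ℝ, 0 < ε → ∃ T : ℝ, ∀ z : ℂ, α ≤ z.re → z.re ≤ β → T ≤ |z.im| →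
      ‖f z‖ ^ b * ‖g z‖ ^ c < ε ∧ ‖g z‖ < ε)
    (I : ℝ → ENNReal)
    (hI : ∀ η : ℝ, I η = ∫⁻ t : ℝ,
      ENNReal.ofReal (‖f (η + t * Complex.I)‖ ^ b * ‖g (η + t * Complex.I)‖ ^ c))
    (γ : ℝ) (hγ1 : α ≤ γ) (hγ2 : γ ≤ β) :
    I γ ≤ I α ^ ((β - γ) / (β - α)) * I β ^ ((γ - α) / (β - α)) := by

  have hd : 0 < β - α := sub_pos.2 hab
  rcases hγ1.eq_or_lt with rfl | h1
  · simp [div_self hd.ne']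
  rcases hγ2.eq_or_lt with rfl | h2
  · simp [div_self hd.ne']
  set P : ℂ → ℂ := fun z => ((max α (min β z.re) : ℝ) : ℂ) + (z.im : ℂ) * Complex.I with hP
  have hPc : Continuous P := by simp only [hP]; fun_prop
  have hPre : ∀ z, (P z).re = max α (min β z.re) := fun z => by simp [hP]
  have hPmem : ∀ z, P z ∈ {z : ℂ | α ≤ z.re ∧ z.re ≤ β} := fun z => by
    rw [Set.mem_ofPred_eq, hPre]
    exact ⟨le_max_left _ _, max_le hab.le (min_le_left _ _)⟩
  have hPid : ∀ z : ℂ, α ≤ z.re → z.re ≤ β → P z = z := fun z h1 h2 => gcv_clamp_eq h1 h2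
  have hfP : Continuous fun z => f (P z) := hfc.comp_continuous hPc hPmem
  have hgP : Continuous fun z => g (P z) := hgc.comp_continuous hPc hPmem
  have hopen : IsOpen {z : ℂ | α < z.re ∧ z.re < β} :=
    (isOpen_lt continuous_const Complex.continuous_re).inter
      (isOpen_lt Complex.continuous_re continuous_const)
  have key := gcv_abs (v := fun z => ‖f (P z)‖ ^ b * ‖g (P z)‖ ^ c) hab
    ((hfP.norm.rpow_const fun _ => Or.inr hb.le).mul
      (hgP.norm.rpow_const fun _ => Or.inr hc.le)) (fun z => by positivity) ?_ ?_ γ h1 h2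
  · have conv : ∀ η : ℝ, α ≤ η → η ≤ β → I η = ∫⁻ t : ℝ,
        ENNReal.ofReal (‖f (P (η + t * Complex.I))‖ ^ b * ‖g (P (η + t * Complex.I))‖ ^ c) := by
      intro η hη1 hη2
      rw [hI]
      refine lintegral_congr fun t => ?_
      rw [hPid] <;> simpa
    rw [conv γ hγ1 hγ2, conv α le_rfl hab.le, conv β hab.le le_rfl]
    exact key
  · intro l z r hr hr1 hr2
    have hre : ∀ w ∈ closedBall z r, α < w.re ∧ w.re < β := by
      intro w hw
      rw [mem_closedBall, dist_eq_norm] at hw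
      have := abs_le.1 ((Complex.abs_re_le_norm (w - z)).trans hw)
      rw [Complex.sub_re] at this
      exact ⟨by linarith [this.1], by linarith [this.2]⟩
    have hexp : ∀ w : ℂ, Real.exp (l * w.re) = ‖Complex.exp ((l / b : ℝ) * w)‖ ^ b := by
      intro w
      rw [Complex.norm_exp, ← Real.exp_mul]
      congr 1
      simp
      field_simp
    have heq : ∀ w ∈ closedBall z r,
        Real.exp (l * w.re) * (‖f (P w)‖ ^ b * ‖g (P w)‖ ^ c)
          = ‖Complex.exp ((l / b : ℝ) * w) * f w‖ ^ b * ‖g w‖ ^ c := by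
      intro w hw
      rw [hPid w (hre w hw).1.le (hre w hw).2.le, hexp, norm_mul,
        Real.mul_rpow (norm_nonneg _) (norm_nonneg _), mul_assoc]
    have han : AnalyticOnNhd ℂ f (closedBall z r) := fun w hw =>
      hf.analyticAt (hopen.mem_nhds (hre w hw))
    have hag : AnalyticOnNhd ℂ g (closedBall z r) := fun w hw =>
      hg.analyticAt (hopen.mem_nhds (hre w hw))
    have hae : AnalyticOnNhd ℂ (fun w => Complex.exp ((l / b : ℝ) * w)) (closedBall z r) :=
      fun w _ => by fun_prop
    have h := gcv_submean (f := fun w => Complex.exp ((l / b : ℝ) * w) * f w) hr hb hc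
      (hae.mul han) hag
    rw [heq z (by simp [hr.le])]
    refine h.trans (le_of_eq (circleAverage_congr_sphere fun w hw => ?_))
    rw [abs_of_pos hr] at hw
    exact (heq w (sphere_subset_closedBall hw)).symm
  · intro ε hε
    obtain ⟨T, hT⟩ := hdecay ε hε
    refine ⟨T, fun z hz1 hz2 hz3 => ?_⟩
    have := (hT z hz1 hz2 hz3).1.le
    simpa only [hPid z hz1 hz2] using this
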